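/- Second-order expansion of the expected check loss: let τ ∈ (0,1) and let X be a real-valued random variable with Lebesgue density f whose cumulative distribution function F satisfies F(0) = τ, and suppose there are constants c > 0 and M ≥ 0 such that |f(t) − f(0)| ≤ M|t| for all |t| ≤ c. Then for every v with |v| ≤ c, |E[ρ_τ(X − v) − ρ_τ(X)] − (1/2) f(0) v²| ≤ M|v|³/6. -/

import Mathlib

open MeasureTheory

/-- The check function `ρ_τ(x) = x (τ - 1{x<0})`. -/
noncomputable def rho (τ x : ℝ) : ℝ := x * (τ - if x < 0 then 1 else 0)

/-!
Knight's identity writes `ρ_τ(x - v) - ρ_τ(x)` as `v (1{x ≤ 0} - τ)` plus the tent `|x - v|` on the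
interval between `0` and `v`. In expectation the first part is `v (F(0) - τ)`, which vanishes when
`F(0) = τ`, and the second is `∫ |x - v| f(x) dx` over that interval. Replacing `f` by `f(0)` there
gives `f(0) v² / 2`, with an error of at most `M ∫ |x - v| |x| dx = M |v|³ / 6`.
-/

open Set

lemma abs_sub_left_eq_of_mem_uIoc {a b x : ℝ} (hx : x ∈ uIoc a b) :
    |x - a| = |b - a| - |x - b| := by
  rw [mem_uIoc] at hx
  grind

lemma setIntegral_uIoc_abs_sub_right (a b : ℝ) :
    ∫ x in uIoc a b, |x - b| = (b - a) ^ 2 / 2 := by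
  have h := integral_pow_abs_sub_uIoc (a := b) (b := a) 1
  simp only [uIoc_comm b a, pow_one] at h
  rw [h, sq_abs]
  ring

lemma setIntegral_uIoc_abs_sub_mul_abs_sub (a b : ℝ) :
    ∫ x in uIoc a b, |x - b| * |x - a| = |b - a| ^ 3 / 6 := by
  have h_sq : ∫ x in uIoc a b, |x - b| ^ 2 = |b - a| ^ 3 / 3 := by
    have h := integral_pow_abs_sub_uIoc (a := b) (b := a) 2
    rw [uIoc_comm, abs_sub_comm a b] at h
    rw [h]
    norm_num
  calc ∫ x in uIoc a b, |x - b| * |x - a|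
      = ∫ x in uIoc a b, (|b - a| * |x - b| - |x - b| ^ 2) :=
        setIntegral_congr_fun measurableSet_uIoc fun x hx ↦ by
          simp only [abs_sub_left_eq_of_mem_uIoc hx]
          ring
    _ = |b - a| * ((b - a) ^ 2 / 2) - |b - a| ^ 3 / 3 := by
        rw [integral_sub (Continuous.integrableOn_uIoc (by fun_prop))
          (Continuous.integrableOn_uIoc (by fun_prop)), integral_const_mul,
          setIntegral_uIoc_abs_sub_right, h_sq]
    _ = |b - a| ^ 3 / 6 := by
        rw [← sq_abs (b - a)]
        ring

lemma abs_setIntegral_uIoc_abs_sub_mul_sub_le {f : ℝ → ℝ} {a b p M : ℝ}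
    (hf : AEStronglyMeasurable f (volume.restrict (uIoc a b)))
    (hfp : ∀ x ∈ uIoc a b, |f x - p| ≤ M * |x - a|) :
    |(∫ x in uIoc a b, |x - b| * f x) - 1 / 2 * p * (b - a) ^ 2| ≤ M * |b - a| ^ 3 / 6 := by
  have h_bound : ∀ᵐ x ∂volume.restrict (uIoc a b),
      ‖|x - b| * (f x - p)‖ ≤ M * (|x - b| * |x - a|) := by
    filter_upwards [ae_restrict_mem measurableSet_uIoc] with x hx
    calc ‖|x - b| * (f x - p)‖ = |x - b| * |f x - p| := by
          rw [Real.norm_eq_abs, abs_mul, abs_abs]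
      _ ≤ |x - b| * (M * |x - a|) := by
          gcongr
          exact hfp x hx
      _ = M * (|x - b| * |x - a|) := by ring
  have h_dom : IntegrableOn (fun x ↦ M * (|x - b| * |x - a|)) (uIoc a b) :=
    Continuous.integrableOn_uIoc (by fun_prop)
  have h_err : IntegrableOn (fun x ↦ |x - b| * (f x - p)) (uIoc a b) :=
    h_dom.mono' (by fun_prop) h_bound
  have h_tent : IntegrableOn (fun x ↦ |x - b| * p) (uIoc a b) :=
    Continuous.integrableOn_uIoc (by fun_prop)
  have h_split : (∫ x in uIoc a b, |x - b| * f x) - 1 / 2 * p * (b - a) ^ 2 =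
      ∫ x in uIoc a b, |x - b| * (f x - p) := by
    have h_add := integral_add h_err h_tent
    simp only [← mul_add, sub_add_cancel] at h_add
    rw [h_add, integral_mul_const, setIntegral_uIoc_abs_sub_right]
    ring
  calc |(∫ x in uIoc a b, |x - b| * f x) - 1 / 2 * p * (b - a) ^ 2|
      = ‖∫ x in uIoc a b, |x - b| * (f x - p)‖ := by rw [h_split, Real.norm_eq_abs]
    _ ≤ ∫ x in uIoc a b, M * (|x - b| * |x - a|) := norm_integral_le_of_norm_le h_dom h_bound
    _ = M * |b - a| ^ 3 / 6 := by
        rw [integral_const_mul, setIntegral_uIoc_abs_sub_mul_abs_sub, mul_div_assoc]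

lemma measurable_rho (τ : ℝ) : Measurable (rho τ) :=
  measurable_id.mul
    (measurable_const.sub (measurable_const.ite measurableSet_Iio measurable_const))

lemma rho_sub_sub_rho (τ v x : ℝ) :
    rho τ (x - v) - rho τ x =
      (Iic 0).indicator (fun _ ↦ v) x - τ * v + (uIoc 0 v).indicator (fun y ↦ |y - v|) x := by
  by_cases hx : x ∈ uIoc 0 v
  · rw [indicator_of_mem hx]
    rw [mem_uIoc] at hx
    simp only [rho, indicator_apply, mem_Iic]
    grind
  · rw [indicator_of_notMem hx]
    rw [mem_uIoc] at hx
    simp only [rho, indicator_apply, mem_Iic]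
    grind

lemma integral_rho_sub_sub_rho (ν : Measure ℝ) [IsFiniteMeasure ν] (τ v : ℝ) :
    ∫ x, (rho τ (x - v) - rho τ x) ∂ν =
      (ν.real (Iic 0) - τ * ν.real univ) * v + ∫ x in uIoc 0 v, |x - v| ∂ν := by
  have h_step : Integrable ((Iic (0 : ℝ)).indicator fun _ ↦ v) ν :=
    (integrable_const v).indicator measurableSet_Iic
  have h_tent : Integrable ((uIoc 0 v).indicator fun x ↦ |x - v|) ν :=
    (Continuous.integrableOn_uIoc (by fun_prop)).integrable_indicator measurableSet_uIoc
  simp only [rho_sub_sub_rho]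
  rw [integral_add (by exact h_step.sub (integrable_const _)) h_tent,
    integral_sub h_step (integrable_const _), integral_indicator_const _ measurableSet_Iic,
    integral_const, integral_indicator measurableSet_uIoc]
  simp only [smul_eq_mul]
  ring

lemma setIntegral_eq_of_restrict_eq_withDensity {α : Type*} [MeasurableSpace α] {ν κ : Measure α}
    {f : α → ℝ} {s t : Set α} (hs : MeasurableSet s) (hst : s ⊆ t)
    (hf_nonneg : ∀ x ∈ s, 0 ≤ f x) (hf_meas : AEMeasurable f (κ.restrict s))
    (hdens : ν.restrict t = (κ.restrict t).withDensity fun x ↦ ENNReal.ofReal (f x)) (g : α → ℝ) :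
    ∫ x in s, g x ∂ν = ∫ x in s, g x * f x ∂κ := by
  have h_dens : ν.restrict s = (κ.restrict s).withDensity fun x ↦ ENNReal.ofReal (f x) := by
    rw [← Measure.restrict_restrict_of_subset hst, hdens, restrict_withDensity hs,
      Measure.restrict_restrict_of_subset hst]
  rw [h_dens, integral_withDensity_eq_integral_toReal_smul₀ hf_meas.ennreal_ofReal (by simp)]
  exact setIntegral_congr_fun hs fun x hx ↦ by
    simp only [smul_eq_mul, ENNReal.toReal_ofReal (hf_nonneg x hx), mul_comm]

theorem expected_check_loss_second_order_general {Ω : Type*} [MeasurableSpace Ω]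
    {μ : Measure Ω} [IsFiniteMeasure μ] {X : Ω → ℝ} (hX : AEMeasurable X μ) (τ : ℝ)
    {f : ℝ → ℝ} {c M : ℝ} (hf_nonneg : ∀ t ∈ Icc (-c) c, 0 ≤ f t)
    (hf_meas : AEMeasurable f (volume.restrict (Icc (-c) c)))
    (hdens : (μ.map X).restrict (Icc (-c) c) =
      (volume.restrict (Icc (-c) c)).withDensity fun t ↦ ENNReal.ofReal (f t))
    (hlip : ∀ t ∈ Icc (-c) c, |f t - f 0| ≤ M * |t|) {v : ℝ} (hv : |v| ≤ c) :
    |(∫ ω, (rho τ (X ω - v) - rho τ (X ω)) ∂μ) - (μ.real {ω | X ω ≤ 0} - τ * μ.real univ) * v -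
        1 / 2 * f 0 * v ^ 2| ≤ M * |v| ^ 3 / 6 := by
  have h_sub : uIoc 0 v ⊆ Icc (-c) c := fun x hx ↦ by
    rw [mem_uIoc] at hx
    grind
  have h_aem : AEMeasurable f (volume.restrict (uIoc 0 v)) := hf_meas.mono_set h_sub
  have h_cdf : (μ.map X).real (Iic 0) = μ.real {ω | X ω ≤ 0} :=
    map_measureReal_apply_of_aemeasurable hX measurableSet_Iic
  have h_mass : (μ.map X).real univ = μ.real univ :=
    map_measureReal_apply_of_aemeasurable hX MeasurableSet.univ
  have h_loss : ∫ ω, (rho τ (X ω - v) - rho τ (X ω)) ∂μ =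
      (μ.real {ω | X ω ≤ 0} - τ * μ.real univ) * v + ∫ x in uIoc 0 v, |x - v| * f x := by
    have h_meas : Measurable fun x ↦ rho τ (x - v) - rho τ x :=
      ((measurable_rho τ).comp (measurable_id.sub_const v)).sub (measurable_rho τ)
    rw [← integral_map hX h_meas.aestronglyMeasurable, integral_rho_sub_sub_rho, h_cdf, h_mass,
      setIntegral_eq_of_restrict_eq_withDensity measurableSet_uIoc h_sub
        (fun x hx ↦ hf_nonneg x (h_sub hx)) h_aem hdens]
  rw [h_loss, add_sub_cancel_left]
  simpa only [sub_zero] using abs_setIntegral_uIoc_abs_sub_mul_sub_le h_aem.aestronglyMeasurable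
    fun x hx ↦ by simpa only [sub_zero] using hlip x (h_sub hx)

/-- Second-order expansion of the expected check loss for a random variable
with a Lebesgue density `f` that is `M`-Lipschitz-at-`0` on `[-c, c]` and whose
CDF satisfies `F(0) = τ`. -/
theorem expected_check_loss_second_order {Ω : Type*} [MeasurableSpace Ω]
    (μ : Measure Ω) [IsProbabilityMeasure μ] (X : Ω → ℝ) (hX : Measurable X)
    (τ : ℝ) (hτ0 : 0 < τ) (hτ1 : τ < 1)
    (f : ℝ → ℝ) (hf_nonneg : ∀ t, 0 ≤ f t) (hf_meas : Measurable f)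
    (hdens : μ.map X = volume.withDensity (fun t => ENNReal.ofReal (f t)))
    (hF0 : (μ {ω | X ω ≤ 0}).toReal = τ)
    (c : ℝ) (hc : 0 < c) (M : ℝ) (hM : 0 ≤ M)
    (hlip : ∀ t : ℝ, |t| ≤ c → |f t - f 0| ≤ M * |t|) :
    ∀ v : ℝ, |v| ≤ c →
      |(∫ ω, (rho τ (X ω - v) - rho τ (X ω)) ∂μ) - (1/2) * f 0 * v ^ 2| ≤
        M * |v| ^ 3 / 6 := by
  intro v hv
  have h := expected_check_loss_second_order_general hX.aemeasurable τ (fun t _ ↦ hf_nonneg t)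
    hf_meas.aemeasurable (by rw [hdens, restrict_withDensity measurableSet_Icc])
    (fun t ht ↦ hlip t (abs_le.2 ht)) hv
  simpa [measureReal_def, hF0] using h
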